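/- arXiv:2601.18511 — 2 statements merged into one kernel-verified Lean document; each statement's English description precedes it below -/
import Mathlib

section
/- (JKLS matrix-multiplication identity) For every positive integer d and all matrices A, B ∈ ℝ^{d×d} (indices modulo d), the product C = A·B satisfies C = Σ_{k=0}^{d-1} Rot_col^k(σ(A)) ⊙ Rot_row^k(τ(B)), where ⊙ denotes the entrywise (Hadamard) product. -/
/-- Row rotation: `(RotRow k M) i j = M (i+k) j`, indices modulo `d`. -/
def RotRow (d : ℕ) (k : ℤ) (M : Matrix (ZMod d) (ZMod d) ℝ) :
    Matrix (ZMod d) (ZMod d) ℝ :=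
  fun i j => M (i + (k : ZMod d)) j

/-- Column rotation: `(RotCol k M) i j = M i (j+k)`, indices modulo `d`. -/
def RotCol (d : ℕ) (k : ℤ) (M : Matrix (ZMod d) (ZMod d) ℝ) :
    Matrix (ZMod d) (ZMod d) ℝ :=
  fun i j => M i (j + (k : ZMod d))

/-- The permutation `τ`: `(tau M) i j = M (i+j) j`, indices modulo `d`. -/
def tau (d : ℕ) (M : Matrix (ZMod d) (ZMod d) ℝ) :
    Matrix (ZMod d) (ZMod d) ℝ :=
  fun i j => M (i + j) j

/-- The permutation `σ`: `(sigma M) i j = M i (i+j)`, indices modulo `d`. -/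
def sigma (d : ℕ) (M : Matrix (ZMod d) (ZMod d) ℝ) :
    Matrix (ZMod d) (ZMod d) ℝ :=
  fun i j => M i (i + j)

section GroupIndexed

open scoped Matrix

variable {m n R : Type*}

/-- The column rotation `Rot_col^k` of a matrix whose columns are indexed by any additive
structure, so that `k` is itself a column index. -/
def rotateCols [Add n] (k : n) (M : Matrix m n R) : Matrix m n R :=
  M.submatrix id (· + k)

/-- The row rotation `Rot_row^k` of a matrix whose rows are indexed by any additive structure,
so that `k` is itself a row index. -/
def rotateRows [Add m] (k : m) (M : Matrix m n R) : Matrix m n R :=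
  M.submatrix (· + k) id

/-- The map `σ` over any additive index structure: row `i` is rotated by `i`. -/
def shearCols [Add n] (M : Matrix n n R) : Matrix n n R :=
  Matrix.of fun i j => M i (i + j)

/-- The map `τ` over any additive index structure: column `j` is rotated by `j`. -/
def shearRows [Add n] (M : Matrix n n R) : Matrix n n R :=
  Matrix.of fun i j => M (i + j) j

theorem rotateCols_shearCols_apply [Add n] (k : n) (M : Matrix n n R) (i j : n) :
    rotateCols k (shearCols M) i j = M i (i + (j + k)) :=
  rfl

theorem rotateRows_shearRows_apply [AddCommSemigroup n] (k : n) (M : Matrix n n R) (i j : n) :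
    rotateRows k (shearRows M) i j = M (i + (j + k)) j :=
  congrArg (M · j) (by rw [add_assoc, add_comm k] : i + k + j = i + (j + k))

theorem jkls_identity_general [Fintype n] [AddCommGroup n] [NonUnitalNonAssocSemiring R]
    (A B : Matrix n n R) :
    A * B = ∑ k : n, rotateCols k (shearCols A) ⊙ rotateRows k (shearRows B) := by
  ext i j
  calc (A * B) i j
    _ = ∑ l, A i l * B l j := Matrix.mul_apply
    _ = ∑ k, A i (i + (j + k)) * B (i + (j + k)) j :=
      (((Equiv.addLeft j).trans (Equiv.addLeft i)).sum_comp fun l => A i l * B l j).symm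
    _ = (∑ k, rotateCols k (shearCols A) ⊙ rotateRows k (shearRows B)) i j := by
      simp only [Matrix.sum_apply, Matrix.hadamard_apply, rotateCols_shearCols_apply,
        rotateRows_shearRows_apply]

end GroupIndexed

theorem sum_range_natCast_zmod {M : Type*} [AddCommMonoid M] (d : ℕ) [NeZero d]
    (f : ZMod d → M) : ∑ k ∈ Finset.range d, f k = ∑ x : ZMod d, f x :=
  Finset.sum_nbij' (fun k => (k : ZMod d)) ZMod.val (fun _ _ => Finset.mem_univ _)
    (fun x _ => Finset.mem_range.mpr x.val_lt)
    (fun _ hk => ZMod.val_natCast_of_lt (Finset.mem_range.mp hk))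
    (fun x _ => ZMod.natCast_zmod_val x) (fun _ _ => rfl)

theorem RotCol_sigma_natCast (d k : ℕ) (M : Matrix (ZMod d) (ZMod d) ℝ) :
    RotCol d k (sigma d M) = rotateCols (k : ZMod d) (shearCols M) := by
  ext i j
  simp only [RotCol, sigma, rotateCols_shearCols_apply, Int.cast_natCast]

theorem RotRow_tau_natCast (d k : ℕ) (M : Matrix (ZMod d) (ZMod d) ℝ) :
    RotRow d k (tau d M) = rotateRows (k : ZMod d) (shearRows M) := by
  ext i j
  simp only [RotRow, tau, rotateRows, shearRows, Matrix.submatrix_apply, Matrix.of_apply, id,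
    Int.cast_natCast]

/-- The JKLS matrix-multiplication identity:
`A·B = Σ_{k=0}^{d-1} Rot_col^k(σ(A)) ⊙ Rot_row^k(τ(B))`. -/
theorem jkls_identity (d : ℕ) [NeZero d] (A B : Matrix (ZMod d) (ZMod d) ℝ) :
    A * B = ∑ k ∈ Finset.range d,
      Matrix.hadamard (RotCol d (k : ℤ) (sigma d A)) (RotRow d (k : ℤ) (tau d B)) := by
  simp only [RotCol_sigma_natCast, RotRow_tau_natCast]
  rw [jkls_identity_general, ← sum_range_natCast_zmod]
end

section
/- Let P ∈ ℝ[X] be a polynomial of even degree d with positive leading coefficient. Then there exist polynomials U, V ∈ ℝ[X] of degree at most d/2 and a real scalar m such that P(x) = U(x)² + V(x)² − m for all x ∈ ℝ. -/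
open Polynomial

/-!
Adding a large enough constant makes `P` nonnegative on `ℝ`, and a nonnegative real polynomial is a
sum of two squares: a complex root `a + bi` splits off the factor `(X - a)² + b²`, where a real
root (`b = 0`) is double because it is a minimum, and sums of two squares are closed under products.
The leading terms of `U²` and `V²` cannot cancel, so `deg (U² + V²) = 2 max (deg U) (deg V)`.
-/

open Filter

theorem natDegree_sq_add_sq {R : Type*} [CommRing R] [LinearOrder R] [IsStrictOrderedRing R]
    (U V : R[X]) : (U ^ 2 + V ^ 2).natDegree = 2 * max U.natDegree V.natDegree := by
  rcases eq_or_ne U 0 with rfl | hU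
  · simp
  rcases eq_or_ne V 0 with rfl | hV
  · simp
  have hlead : (U ^ 2).leadingCoeff + (V ^ 2).leadingCoeff ≠ 0 := by
    have hU_lead : U.leadingCoeff ≠ 0 := leadingCoeff_ne_zero.mpr hU
    rw [leadingCoeff_pow, leadingCoeff_pow]
    positivity
  apply natDegree_eq_of_degree_eq_some
  rw [degree_add_eq_of_leadingCoeff_add_ne_zero hlead, degree_eq_natDegree (pow_ne_zero 2 hU),
    degree_eq_natDegree (pow_ne_zero 2 hV), natDegree_pow, natDegree_pow, ← Nat.mul_max_mul_left]
  norm_cast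

theorem eval_nonneg_of_mul_eval_nonneg {𝕜 : Type*} [Field 𝕜] [LinearOrder 𝕜]
    [IsStrictOrderedRing 𝕜] [TopologicalSpace 𝕜] [OrderTopology 𝕜] {S R : 𝕜[X]}
    (hS₀ : S ≠ 0) (hS : ∀ x, 0 ≤ S.eval x) (hSR : ∀ x, 0 ≤ (S * R).eval x) (x : 𝕜) :
    0 ≤ R.eval x := by
  have hdense : Dense {y | S.IsRoot y}ᶜ := by
    simpa [Set.compl_eq_univ_sdiff] using dense_univ.sdiff_finite (finite_setOfPred_isRoot hS₀)
  have hclosed : IsClosed {y | 0 ≤ R.eval y} := isClosed_le continuous_const R.continuous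
  refine hclosed.closure_subset_iff.mpr (fun y hy ↦ ?_) (hdense x)
  have hSy : 0 < S.eval y := (hS y).lt_of_ne' hy
  exact nonneg_of_mul_nonneg_right (by simpa only [eval_mul] using hSR y) hSy

section NormedField

variable {𝕜 : Type*} [NormedField 𝕜] [LinearOrder 𝕜] [IsStrictOrderedRing 𝕜] [OrderTopology 𝕜]
  {P : 𝕜[X]}

theorem tendsto_eval_atBot_atTop_of_even_natDegree (hdeg : 0 < P.degree) (heven : Even P.natDegree)
    (hlead : 0 ≤ P.leadingCoeff) : Tendsto P.eval atBot atTop := by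
  have hcomp : Tendsto (P.comp (-X)).eval atTop atTop :=
    (P.comp (-X)).tendsto_atTop_of_leadingCoeff_nonneg (by simpa using hdeg)
      (by simpa [heven.neg_one_pow] using hlead)
  simpa [Function.comp_def] using hcomp.comp tendsto_neg_atBot_atTop

theorem bddBelow_range_eval_of_even_natDegree [CompactIccSpace 𝕜] (heven : Even P.natDegree)
    (hlead : 0 ≤ P.leadingCoeff) : BddBelow (Set.range P.eval) := by
  rcases le_or_gt P.degree 0 with hconst | hdeg
  · rw [eq_C_of_degree_le_zero hconst]
    exact ⟨P.coeff 0, by rintro _ ⟨x, rfl⟩; simp⟩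
  have htendsto : Tendsto P.eval (cocompact 𝕜) atTop :=
    ((tendsto_eval_atBot_atTop_of_even_natDegree hdeg heven hlead).sup
      (P.tendsto_atTop_of_leadingCoeff_nonneg hdeg hlead)).mono_left cocompact_le_atBot_atTop
  obtain ⟨x₀, hx₀⟩ := P.continuous.exists_forall_le htendsto
  exact ⟨P.eval x₀, Set.forall_mem_range.mpr hx₀⟩

end NormedField

section Real

variable {P : ℝ[X]}

theorem X_sub_C_sq_dvd_of_isLocalExtr {a : ℝ} (hroot : P.IsRoot a)
    (hextr : IsLocalExtr P.eval a) : (X - C a) ^ 2 ∣ P := by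
  rcases eq_or_ne P 0 with rfl | hP
  · exact dvd_zero _
  have hderiv : P.derivative.IsRoot a := hextr.hasDerivAt_eq_zero (P.hasDerivAt a)
  exact (le_rootMultiplicity_iff hP).mp
    ((one_lt_rootMultiplicity_iff_isRoot hP).mpr ⟨hroot, hderiv⟩)

theorem X_sub_C_re_sq_add_C_im_sq_dvd_of_eval_nonneg (hP : ∀ x, 0 ≤ P.eval x) {z : ℂ}
    (hz : aeval z P = 0) : (X - C z.re) ^ 2 + C z.im ^ 2 ∣ P := by
  by_cases him : z.im = 0
  · have hroot : P.IsRoot z.re := by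
      rw [show z = algebraMap ℝ ℂ z.re from Complex.ext rfl him, aeval_algebraMap_apply] at hz
      simpa using hz
    have hmin : IsLocalMin P.eval z.re := Eventually.of_forall fun x ↦ hroot.le.trans (hP x)
    simpa [him] using X_sub_C_sq_dvd_of_isLocalExtr hroot (.inl hmin)
  · have hquadratic : (X - C z.re) ^ 2 + C z.im ^ 2
        = X ^ 2 - C (2 * z.re) * X + C (‖z‖ ^ 2) := by
      simp only [Complex.sq_norm, Complex.normSq_apply, C_mul, C_add, map_ofNat]
      ring
    exact hquadratic ▸ P.quadratic_dvd_of_aeval_eq_zero_im_ne_zero hz him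

theorem exists_eq_sq_add_sq_of_eval_nonneg (hP : ∀ x, 0 ≤ P.eval x) :
    ∃ U V : ℝ[X], P = U ^ 2 + V ^ 2 := by
  induction hn : P.natDegree using Nat.strong_induction_on generalizing P with
  | _ n ih =>
    subst hn
    by_cases hdeg : P.natDegree = 0
    · obtain ⟨c, rfl⟩ := natDegree_eq_zero.mp hdeg
      have hc : 0 ≤ c := by simpa using hP 0
      exact ⟨C √c, 0, by rw [← C_pow, Real.sq_sqrt hc, zero_pow two_ne_zero, add_zero]⟩
    obtain ⟨z, hz⟩ := IsAlgClosed.exists_aeval_eq_zero ℂ P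
      fun h ↦ hdeg (natDegree_eq_of_degree_eq_some h)
    obtain ⟨R, hPR⟩ := X_sub_C_re_sq_add_C_im_sq_dvd_of_eval_nonneg hP hz
    set S : ℝ[X] := (X - C z.re) ^ 2 + C z.im ^ 2 with hS
    have hS_natDegree : S.natDegree = 2 := by simp [hS, natDegree_sq_add_sq]
    have hS_ne_zero : S ≠ 0 := ne_zero_of_natDegree_gt (n := 0) (by lia)
    have hS_nonneg (x : ℝ) : 0 ≤ S.eval x := by
      simp only [hS, eval_add, eval_pow]
      positivity
    have hR_nonneg : ∀ x, 0 ≤ R.eval x :=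
      eval_nonneg_of_mul_eval_nonneg hS_ne_zero hS_nonneg (hPR ▸ hP)
    have hR_natDegree : R.natDegree < P.natDegree := by
      have hR_ne_zero : R ≠ 0 := by rintro rfl; simp [hPR] at hdeg
      rw [hPR, natDegree_mul hS_ne_zero hR_ne_zero]
      lia
    obtain ⟨U, V, hUV⟩ := ih R.natDegree hR_natDegree hR_nonneg rfl
    exact hPR ▸ sq_add_sq_mul hS hUV

end Real

/-- A real polynomial of even degree with positive leading coefficient can be
written as `U² + V² − m` with `deg U, deg V ≤ d/2`. -/
theorem sos_minus_const (P : Polynomial ℝ) (hdeg : Even P.natDegree)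
    (hlead : 0 < P.leadingCoeff) :
    ∃ (U V : Polynomial ℝ) (m : ℝ),
      U.natDegree ≤ P.natDegree / 2 ∧ V.natDegree ≤ P.natDegree / 2 ∧
      ∀ x : ℝ, P.eval x = (U.eval x) ^ 2 + (V.eval x) ^ 2 - m := by
  obtain ⟨c, hc⟩ := bddBelow_range_eval_of_even_natDegree hdeg hlead.le
  have hnonneg (x : ℝ) : 0 ≤ (P - C c).eval x := by
    simpa using hc (Set.mem_range_self x)
  obtain ⟨U, V, hUV⟩ := exists_eq_sq_add_sq_of_eval_nonneg hnonneg
  have hnatDegree : P.natDegree = 2 * max U.natDegree V.natDegree := by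
    rw [← natDegree_sq_add_sq, ← hUV, natDegree_sub_C]
  refine ⟨U, V, -c, by omega, by omega, fun x ↦ ?_⟩
  have heval := congrArg (eval x) hUV
  simp only [eval_sub, eval_add, eval_pow, eval_C] at heval
  linarith
end
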